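/- There exists κ > 0 such that for every odd differentiable function w : ℝ → ℝ with w and w' square integrable on ℝ and satisfying ∫_ℝ w(x)·Z₁(x) dx = 0, where Z₁(x) = 2^(-3/4)·√3·tanh(x/√2)·sech(x/√2)·cosh(x/(8√2)), one has ∫_ℝ ( (3/4)·w'(x)² - (21/10)·sech²(x/2)·w(x)² ) dx ≥ κ·∫_ℝ w'(x)² dx. -/

import Mathlib

open MeasureTheory

noncomputable def sech (x : ℝ) : ℝ := 1 / Real.cosh x

noncomputable def Z1 (x : ℝ) : ℝ :=
  (2 : ℝ) ^ (-(3 : ℝ) / 4) * Real.sqrt 3 * Real.tanh (x / Real.sqrt 2) * sech (x / Real.sqrt 2)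
    * Real.cosh (x / (8 * Real.sqrt 2))

/-!
By oddness the problem lives on the half-line, for `W y = w (2 y)` with `W 0 = 0`. In the variable
`t = tanh y` the form `∫ W'² - λ ∫ sech² W²` is the Legendre form, whose odd modes `t` and
`5t³ - 3t` have eigenvalues `2` and `12`. Completing the square with a memory term shows
`12 ∫ sech² W² ≤ ∫ W'² + 30 B²`, where `B = ∫ W tanh sech²` is the component on the first mode.
That component is small: `W` is orthogonal to the internal mode, which is close to a multiple of
`tanh sech²`, so after an integration by parts Cauchy-Schwarz bounds `B²` by `∫ W'²` times the
squared norm of the difference of the two primitives. This norm is about `1 / 10`, as a Riemann sum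
evaluated in exact rational arithmetic certifies, and then `30 B²` costs only part of the room
between `12` and the required `56 / 5`.
-/

open Asymptotics Filter Set Topology

/-! ### Hyperbolic functions -/

lemma sech_pos (x : ℝ) : 0 < sech x := one_div_pos.2 (Real.cosh_pos x)

lemma sech_neg (x : ℝ) : sech (-x) = sech x := by
  rw [sech, sech, Real.cosh_neg]

lemma antitoneOn_sech : AntitoneOn sech (Ici 0) := fun y hy z hz hyz => by
  refine one_div_le_one_div_of_le (Real.cosh_pos y) (Real.cosh_le_cosh.2 ?_)
  rwa [abs_of_nonneg hy, abs_of_nonneg hz]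

lemma sech_sq_eq_one_sub_tanh_sq (x : ℝ) : sech x ^ 2 = 1 - Real.tanh x ^ 2 := by
  have hx := (Real.cosh_pos x).ne'
  rw [sech, Real.tanh_eq_sinh_div_cosh]
  field_simp
  linarith [Real.cosh_sq x]

lemma continuous_sech : Continuous sech :=
  continuous_const.div Real.continuous_cosh fun x => (Real.cosh_pos x).ne'

lemma hasDerivAt_tanh (x : ℝ) : HasDerivAt Real.tanh (sech x ^ 2) x := by
  have hx := (Real.cosh_pos x).ne'
  rw [funext Real.tanh_eq_sinh_div_cosh]
  refine ((Real.hasDerivAt_sinh x).div (Real.hasDerivAt_cosh x) hx).congr_deriv ?_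
  rw [sech, div_pow, one_pow, ← Real.cosh_sq_sub_sinh_sq x]
  ring

@[fun_prop]
lemma continuous_tanh : Continuous Real.tanh :=
  continuous_iff_continuousAt.2 fun x => (hasDerivAt_tanh x).continuousAt

lemma tanh_pos {x : ℝ} (hx : 0 < x) : 0 < Real.tanh x := by
  rw [Real.tanh_eq_sinh_div_cosh]
  exact div_pos (Real.sinh_pos_iff.2 hx) (Real.cosh_pos x)

lemma hasDerivAt_sech (x : ℝ) : HasDerivAt sech (-(Real.tanh x * sech x)) x := by
  have hx := (Real.cosh_pos x).ne'
  have h := (Real.hasDerivAt_cosh x).inv hx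
  simp only [funext fun y => show sech y = (Real.cosh y)⁻¹ from one_div _]
  refine h.congr_deriv ?_
  rw [Real.tanh_eq_sinh_div_cosh]
  field_simp

lemma sech_le_two_mul_exp_neg (x : ℝ) : sech x ≤ 2 * Real.exp (-x) := by
  rw [sech, div_le_iff₀ (Real.cosh_pos x), Real.cosh_eq, mul_assoc]
  have h : Real.exp (-x) * Real.exp x = 1 := by rw [← Real.exp_add]; simp
  nlinarith [sq_nonneg (Real.exp (-x))]

lemma sech_sq_isBigO_exp : (fun y => sech y ^ 2) =O[atTop] fun y => Real.exp (-2 * y) := by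
  refine .of_bound 4 (.of_forall fun y => ?_)
  rw [Real.norm_of_nonneg (by positivity), Real.norm_of_nonneg (Real.exp_pos _).le]
  calc sech y ^ 2 ≤ (2 * Real.exp (-y)) ^ 2 :=
        pow_le_pow_left₀ (sech_pos y).le (sech_le_two_mul_exp_neg y) 2
    _ = 4 * Real.exp (-2 * y) := by
        rw [mul_pow, ← Real.exp_nat_mul]; norm_num

lemma tendsto_tanh_atTop : Tendsto Real.tanh atTop (𝓝 1) := by
  have hs : Tendsto (fun y => sech y ^ 2) atTop (𝓝 0) :=
    sech_sq_isBigO_exp.trans_tendsto <| Real.tendsto_exp_atBot.comp <|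
      tendsto_id.const_mul_atTop_of_neg (by norm_num)
  have h := (hs.const_sub 1).sqrt
  rw [sub_zero, Real.sqrt_one] at h
  refine h.congr' ?_
  filter_upwards [eventually_gt_atTop 0] with y hy
  rw [sech_sq_eq_one_sub_tanh_sq, sub_sub_cancel, Real.sqrt_sq (tanh_pos hy).le]

lemma tanh_isBigO_one (l : Filter ℝ) : Real.tanh =O[l] fun _ => (1 : ℝ) :=
  .of_bound 1 (.of_forall fun y => by simpa using (Real.abs_tanh_lt_one y).le)

/-! ### Functions with square-integrable derivative -/

section Growth

variable {W : ℝ → ℝ}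

lemma memLp_two_deriv {s : Set ℝ} (hi : IntegrableOn (fun y => deriv W y ^ 2) s) :
    MemLp (deriv W) 2 (volume.restrict s) :=
  (memLp_two_iff_integrable_sq (aestronglyMeasurable_deriv W _)).2 hi

lemma intervalIntegrable_deriv_of_integrableOn_sq
    (hi : IntegrableOn (fun y => deriv W y ^ 2) (Ioi 0)) {y : ℝ} (hy : 0 ≤ y) :
    IntervalIntegrable (deriv W) volume 0 y :=
  (intervalIntegrable_iff_integrableOn_Ioc_of_le hy).2 <|
    (memLp_two_deriv (hi.mono_set Ioc_subset_Ioi_self)).integrable one_le_two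

lemma abs_le_of_integrableOn_deriv_sq (hW : Differentiable ℝ W) (h0 : W 0 = 0)
    (hi : IntegrableOn (fun y => deriv W y ^ 2) (Ioi 0)) {y : ℝ} (hy : 0 ≤ y) :
    |W y| ≤ y + ∫ z in Ioi 0, deriv W z ^ 2 := by
  have hd := intervalIntegrable_deriv_of_integrableOn_sq hi hy
  have hsq : IntervalIntegrable (fun z => deriv W z ^ 2) volume 0 y :=
    (intervalIntegrable_iff_integrableOn_Ioc_of_le hy).2 (hi.mono_set Ioc_subset_Ioi_self)
  calc |W y| = |∫ z in (0 : ℝ)..y, deriv W z| := by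
        rw [intervalIntegral.integral_deriv_eq_sub (fun z _ => hW z) hd, h0, sub_zero]
    _ ≤ ∫ z in (0 : ℝ)..y, |deriv W z| := intervalIntegral.abs_integral_le_integral_abs hy
    _ ≤ ∫ z in (0 : ℝ)..y, (1 + deriv W z ^ 2) :=
        intervalIntegral.integral_mono hy hd.abs (intervalIntegrable_const.add hsq) fun z => by
          change |deriv W z| ≤ 1 + deriv W z ^ 2
          nlinarith [sq_nonneg (|deriv W z| - 1), sq_abs (deriv W z)]
    _ = y + ∫ z in Ioc 0 y, deriv W z ^ 2 := by
        rw [intervalIntegral.integral_add intervalIntegrable_const hsq,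
          intervalIntegral.integral_of_le hy (f := fun z => deriv W z ^ 2)]
        simp
    _ ≤ y + ∫ z in Ioi 0, deriv W z ^ 2 := by
        gcongr
        · exact .of_forall fun z => sq_nonneg _
        · exact Ioc_subset_Ioi_self

lemma isBigO_exp_of_integrableOn_deriv_sq (hW : Differentiable ℝ W) (h0 : W 0 = 0)
    (hi : IntegrableOn (fun y => deriv W y ^ 2) (Ioi 0)) {b : ℝ} (hb : 0 < b) :
    W =O[atTop] fun y => Real.exp (b * y) := by
  have hlin : W =O[atTop] fun y => y + ∫ z in Ioi 0, deriv W z ^ 2 := by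
    refine .of_bound 1 ?_
    filter_upwards [eventually_ge_atTop 0] with y hy
    rw [one_mul]
    exact (abs_le_of_integrableOn_deriv_sq hW h0 hi hy).trans (le_abs_self _)
  have hid : (fun y : ℝ => y) =o[atTop] fun y => Real.exp (b * y) := by
    simpa using isLittleO_pow_exp_pos_mul_atTop 1 hb
  have hconst : (fun _ : ℝ => ∫ z in Ioi 0, deriv W z ^ 2) =o[atTop] fun y => Real.exp (b * y) := by
    simpa using (isLittleO_pow_exp_pos_mul_atTop 0 hb).const_mul_left (∫ z in Ioi 0, deriv W z ^ 2)
  exact hlin.trans (hid.add hconst).isBigO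

end Growth

/-! ### The spectral gap above the first Legendre mode -/

section SpectralGap

variable {W : ℝ → ℝ}

/-- The partial moment `∫₀ʸ W tanh sech²` of `W` against the first Legendre mode. -/
noncomputable def tanhMoment (W : ℝ → ℝ) (y : ℝ) : ℝ :=
  ∫ z in (0 : ℝ)..y, W z * Real.tanh z * sech z ^ 2

/-- The boundary term of the completed square in `hasDerivAt_legendreBoundary`. It is a quadratic
form in `W` and `tanhMoment W`; Lean's division makes it vanish at `0`, which is also its limit. -/
noncomputable def legendreBoundary (W : ℝ → ℝ) (y : ℝ) : ℝ :=
  6 * sech y ^ 2 / Real.tanh y * W y ^ 2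
    - 30 * sech y ^ 2 / Real.tanh y ^ 3 * (W y * tanhMoment W y)
    + (45 - 75 * Real.tanh y ^ 2) / Real.tanh y ^ 5 * tanhMoment W y ^ 2

lemma continuous_mul_tanh_mul_sech_sq (hW : Continuous W) :
    Continuous fun y => W y * Real.tanh y * sech y ^ 2 :=
  (hW.mul continuous_tanh).mul (continuous_sech.pow 2)

lemma hasDerivAt_tanhMoment (hW : Continuous W) (y : ℝ) :
    HasDerivAt (tanhMoment W) (W y * Real.tanh y * sech y ^ 2) y :=
  (continuous_mul_tanh_mul_sech_sq hW).integral_hasStrictDerivAt 0 y |>.hasDerivAt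

/-- The square vanishes for `W = P ∘ tanh` with `P = t` and with `P = 5t³ - 3t`, the first two odd
Legendre polynomials; this determines its coefficients. -/
lemma hasDerivAt_legendreBoundary (hW : Differentiable ℝ W) {y : ℝ} (hy : 0 < y) :
    HasDerivAt (legendreBoundary W)
      (deriv W y ^ 2 - 12 * (sech y ^ 2 * W y ^ 2)
        - (deriv W y - 6 * sech y ^ 2 / Real.tanh y * W y
            + 15 * sech y ^ 2 / Real.tanh y ^ 3 * tanhMoment W y) ^ 2) y := by
  have ht := (tanh_pos hy).ne'
  have hT := hasDerivAt_tanh y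
  have hR := (hW y).hasDerivAt
  have hF := hasDerivAt_tanhMoment hW.continuous y
  have hRR := ((((hT.pow 2).const_sub 1).const_mul 6).div hT ht).mul (hR.pow 2)
  have hRF := ((((hT.pow 2).const_sub 1).const_mul 30).div (hT.pow 3) (pow_ne_zero 3 ht)).mul
    (hR.mul hF)
  have hFF := ((((hT.pow 2).const_mul 75).const_sub 45).div (hT.pow 5) (pow_ne_zero 5 ht)).mul
    (hF.pow 2)
  refine (((hRR.sub hRF).add hFF).congr_of_eventuallyEq (.of_forall fun z => ?_)).congr_deriv ?_
  · simp [legendreBoundary, sech_sq_eq_one_sub_tanh_sq]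
  · simp only [Pi.pow_apply, Pi.mul_apply, Pi.div_apply, sech_sq_eq_one_sub_tanh_sq]
    push_cast
    field_simp
    ring

lemma intervalIntegral_isBigO_pow_succ {f : ℝ → ℝ} {n : ℕ} (hf : f =O[𝓝[>] 0] fun y => y ^ n) :
    (fun y => ∫ z in (0 : ℝ)..y, f z) =O[𝓝[>] 0] fun y => y ^ (n + 1) := by
  obtain ⟨c, hc⟩ := hf.bound
  obtain ⟨u, hu, hbound⟩ := mem_nhdsGT_iff_exists_Ioo_subset.1 hc
  refine .of_bound |c| ?_
  filter_upwards [Ioo_mem_nhdsGT hu] with y hy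
  calc ‖∫ z in (0 : ℝ)..y, f z‖ ≤ |c| * y ^ n * |y - 0| := by
        refine intervalIntegral.norm_integral_le_of_norm_le_const fun z hz => ?_
        rw [uIoc_of_le hy.1.le] at hz
        calc ‖f z‖ ≤ c * ‖z ^ n‖ := hbound ⟨hz.1, hz.2.trans_lt hy.2⟩
          _ = c * z ^ n := by rw [Real.norm_of_nonneg (pow_nonneg hz.1.le n)]
          _ ≤ |c| * y ^ n := by
            gcongr
            exacts [pow_nonneg hz.1.le n, le_abs_self c, hz.1.le, hz.2]
    _ = |c| * ‖y ^ (n + 1)‖ := by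
        rw [sub_zero, norm_pow, Real.norm_eq_abs, abs_of_pos hy.1]; ring

lemma isBigO_tanh_of_differentiableAt (hW : DifferentiableAt ℝ W 0) (h0 : W 0 = 0) :
    W =O[𝓝[>] 0] Real.tanh := by
  have hid : (fun y : ℝ => y) =O[𝓝 0] Real.tanh := by
    have h := (hasDerivAt_tanh 0).isTheta_sub (pow_pos (sech_pos 0) 2).ne'
    simpa [Function.comp_def] using h.isBigO_symm
  have hlin : W =O[𝓝 0] fun y => y := by simpa [h0] using hW.hasDerivAt.isBigO_sub
  exact (hlin.trans hid).mono nhdsWithin_le_nhds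

lemma tanhMoment_isBigO_tanh_pow_three (hW : DifferentiableAt ℝ W 0) (h0 : W 0 = 0) :
    tanhMoment W =O[𝓝[>] 0] fun y => Real.tanh y ^ 3 := by
  have hlin {f : ℝ → ℝ} (hf : DifferentiableAt ℝ f 0) (hf0 : f 0 = 0) :
      f =O[𝓝[>] 0] fun y => y := by
    simpa [hf0] using hf.hasDerivAt.isBigO_sub.mono nhdsWithin_le_nhds
  have hid := isBigO_tanh_of_differentiableAt differentiableAt_id (id_eq (0 : ℝ))
  have hsech : (fun y => sech y ^ 2) =O[𝓝[>] 0] fun _ => (1 : ℝ) :=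
    (continuous_sech.pow 2).continuousWithinAt.isBigO_one ℝ
  have hdensity : (fun y => W y * Real.tanh y * sech y ^ 2) =O[𝓝[>] 0] fun y => y ^ 2 := by
    simpa [sq] using ((hlin hW h0).mul
      (hlin (hasDerivAt_tanh 0).differentiableAt Real.tanh_zero)).mul hsech
  exact (intervalIntegral_isBigO_pow_succ hdensity).trans (hid.pow 3)

lemma tendsto_legendreBoundary_nhdsGT_zero (hW : DifferentiableAt ℝ W 0) (h0 : W 0 = 0) :
    Tendsto (legendreBoundary W) (𝓝[>] 0) (𝓝 0) := by
  have hWt := isBigO_tanh_of_differentiableAt hW h0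
  have hFt := tanhMoment_isBigO_tanh_pow_three hW h0
  have hterm (n : ℕ) {c f : ℝ → ℝ} (hc : Continuous c)
      (hf : f =O[𝓝[>] 0] fun y => Real.tanh y ^ (n + 1)) :
      (fun y => c y / Real.tanh y ^ n * f y) =O[𝓝[>] 0] Real.tanh := by
    have hmul := (hc.continuousWithinAt.isBigO_one ℝ).mul
      ((isBigO_refl (fun y => (Real.tanh y ^ n)⁻¹) (𝓝[>] 0)).mul hf)
    refine (hmul.congr_left fun y => by ring).trans_eventuallyEq ?_
    filter_upwards [self_mem_nhdsWithin] with y hy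
    have ht := (tanh_pos hy).ne'
    rw [one_mul, pow_succ, inv_mul_cancel_left₀ (pow_ne_zero n ht)]
  have hRR := hterm 1 ((continuous_sech.pow 2).const_mul 6) (hWt.pow 2)
  have hRF := hterm 3 ((continuous_sech.pow 2).const_mul 30)
    ((hWt.mul hFt).congr_right fun y => by ring)
  have hFF := hterm 5 (c := fun y => 45 - 75 * Real.tanh y ^ 2) (by fun_prop)
    ((hFt.pow 2).congr_right fun y => by ring)
  have ht0 : Tendsto Real.tanh (𝓝[>] 0) (𝓝 0) :=
    (continuous_tanh.tendsto' 0 0 Real.tanh_zero).mono_left nhdsWithin_le_nhds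
  refine (((hRR.sub hRF).add hFF).congr_left fun y => ?_).trans_tendsto ht0
  simp [legendreBoundary]

lemma continuousOn_legendreBoundary (hW : Differentiable ℝ W) (h0 : W 0 = 0) :
    ContinuousOn (legendreBoundary W) (Ici 0) := by
  intro y hy
  rcases eq_or_lt_of_le (mem_Ici.1 hy) with rfl | hpos
  · rw [← continuousWithinAt_Ioi_iff_Ici, ContinuousWithinAt]
    simpa [legendreBoundary] using tendsto_legendreBoundary_nhdsGT_zero (hW 0) h0
  · exact (hasDerivAt_legendreBoundary hW hpos).continuousAt.continuousWithinAt

section Infinity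

variable (hW : Differentiable ℝ W) (h0 : W 0 = 0)
  (hi : IntegrableOn (fun y => deriv W y ^ 2) (Ioi 0))
include hW h0 hi

lemma sech_sq_mul_sq_isBigO_exp :
    (fun y => sech y ^ 2 * W y ^ 2) =O[atTop] fun y => Real.exp (-1 * y) := by
  have hWexp := isBigO_exp_of_integrableOn_deriv_sq hW h0 hi (b := 1 / 2) (by norm_num)
  refine (sech_sq_isBigO_exp.mul (hWexp.pow 2)).congr_right fun y => ?_
  rw [← Real.exp_nat_mul, ← Real.exp_add]
  push_cast
  ring_nf

lemma mul_tanh_mul_sech_sq_isBigO_exp :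
    (fun y => W y * Real.tanh y * sech y ^ 2) =O[atTop] fun y => Real.exp (-1 * y) := by
  have hWexp := isBigO_exp_of_integrableOn_deriv_sq hW h0 hi one_pos
  refine ((hWexp.mul (tanh_isBigO_one _)).mul sech_sq_isBigO_exp).congr_right fun y => ?_
  rw [mul_one, ← Real.exp_add]
  ring_nf

lemma integrableOn_sech_sq_mul_sq : IntegrableOn (fun y => sech y ^ 2 * W y ^ 2) (Ioi 0) := by
  refine integrable_of_isBigO_exp_neg one_pos ?_ (by simpa using sech_sq_mul_sq_isBigO_exp hW h0 hi)
  exact ((continuous_sech.pow 2).mul (hW.continuous.pow 2)).continuousOn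

lemma integrableOn_mul_tanh_mul_sech_sq :
    IntegrableOn (fun y => W y * Real.tanh y * sech y ^ 2) (Ioi 0) := by
  refine integrable_of_isBigO_exp_neg one_pos ?_
    (by simpa using mul_tanh_mul_sech_sq_isBigO_exp hW h0 hi)
  exact (continuous_mul_tanh_mul_sech_sq hW.continuous).continuousOn

lemma tendsto_legendreBoundary_atTop :
    Tendsto (legendreBoundary W) atTop
      (𝓝 (-(30 * (∫ y in Ioi 0, W y * Real.tanh y * sech y ^ 2) ^ 2))) := by
  have hexp : Tendsto (fun y : ℝ => Real.exp (-1 * y)) atTop (𝓝 0) := by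
    simpa using Real.tendsto_exp_neg_atTop_nhds_zero
  have ht := tendsto_tanh_atTop
  have hRR := (sech_sq_mul_sq_isBigO_exp hW h0 hi).trans_tendsto hexp
  have hR := (mul_tanh_mul_sech_sq_isBigO_exp hW h0 hi).trans_tendsto hexp
  have hF : Tendsto (tanhMoment W) atTop (𝓝 (∫ y in Ioi 0, W y * Real.tanh y * sech y ^ 2)) :=
    intervalIntegral_tendsto_integral_Ioi 0 (integrableOn_mul_tanh_mul_sech_sq hW h0 hi) tendsto_id
  have hlim := (((hRR.const_mul 6).div ht one_ne_zero).sub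
    (((hR.mul hF).const_mul 30).div (ht.pow 4) (by norm_num))).add
      (((((ht.pow 2).const_mul 75).const_sub 45).div (ht.pow 5) (by norm_num)).mul (hF.pow 2))
  refine (hlim.congr' ?_).trans (le_of_eq (by norm_num))
  filter_upwards [eventually_gt_atTop 0] with y hy
  have hty := (tanh_pos hy).ne'
  simp only [legendreBoundary, Pi.div_apply]
  field_simp

theorem twelve_mul_integral_sech_sq_mul_sq_le :
    12 * ∫ y in Ioi 0, sech y ^ 2 * W y ^ 2 ≤
      (∫ y in Ioi 0, deriv W y ^ 2) + 30 * (∫ y in Ioi 0, W y * Real.tanh y * sech y ^ 2) ^ 2 := by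
  have hS := (integrableOn_sech_sq_mul_sq hW h0 hi).const_mul 12
  have hint : IntegrableOn (fun y => deriv W y ^ 2 - 12 * (sech y ^ 2 * W y ^ 2)) (Ioi 0) :=
    hi.sub hS
  have hbound (b : ℝ) (hb : 0 ≤ b) : legendreBoundary W b ≤
      ∫ y in (0 : ℝ)..b, (deriv W y ^ 2 - 12 * (sech y ^ 2 * W y ^ 2)) := by
    have hftc := intervalIntegral.sub_le_integral_of_hasDeriv_right_of_le hb
      ((continuousOn_legendreBoundary hW h0).mono Icc_subset_Ici_self)
      (fun y hy => (hasDerivAt_legendreBoundary hW hy.1).hasDerivWithinAt)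
      (((integrableOn_Ici_iff_integrableOn_Ioi).2 hint).mono_set Icc_subset_Ici_self)
      fun y _ => sub_le_self _ (sq_nonneg _)
    simpa [legendreBoundary] using hftc
  have hlim := le_of_tendsto_of_tendsto (tendsto_legendreBoundary_atTop hW h0 hi)
    (intervalIntegral_tendsto_integral_Ioi 0 hint tendsto_id)
    ((eventually_ge_atTop 0).mono hbound)
  rw [integral_sub hi hS, integral_const_mul] at hlim
  linarith

end Infinity

end SpectralGap

/-! ### The internal mode and its tail integral -/

lemma tanh_add_le {a b : ℝ} (ha : 0 ≤ a) (hb : 0 ≤ b) :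
    Real.tanh (a + b) ≤ Real.tanh a + Real.tanh b := by
  have hsa := Real.sinh_nonneg_iff.2 ha
  have hsb := Real.sinh_nonneg_iff.2 hb
  have hsum : Real.tanh a + Real.tanh b = Real.sinh (a + b) / (Real.cosh a * Real.cosh b) := by
    rw [Real.tanh_eq_sinh_div_cosh, Real.tanh_eq_sinh_div_cosh, Real.sinh_add]
    field_simp
  rw [hsum, Real.tanh_eq_sinh_div_cosh]
  gcongr
  rw [Real.cosh_add]
  exact le_add_of_nonneg_right (mul_nonneg hsa hsb)

lemma tanh_nat_mul_le {s : ℝ} (hs : 0 ≤ s) (n : ℕ) : Real.tanh (n * s) ≤ n * Real.tanh s := by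
  induction n with
  | zero => simp
  | succ n ih =>
    push_cast
    rw [add_one_mul, add_one_mul]
    exact (tanh_add_le (by positivity) hs).trans (by gcongr)

lemma sinh_mul_le {c y : ℝ} (hc₀ : 0 ≤ c) (hc₁ : c ≤ 1) (hy : 0 ≤ y) :
    Real.sinh (c * y) ≤ c * Real.sinh y := by
  have hderiv (x : ℝ) : HasDerivAt (fun x => c * Real.sinh x - Real.sinh (c * x))
      (c * (Real.cosh x - Real.cosh (c * x))) x := by
    have hlin : HasDerivAt (fun x : ℝ => c * x) c x := by
      simpa using (hasDerivAt_id x).const_mul c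
    exact (((Real.hasDerivAt_sinh x).const_mul c).sub hlin.sinh).congr_deriv (by ring)
  have hmono : MonotoneOn (fun x => c * Real.sinh x - Real.sinh (c * x)) (Ici 0) := by
    refine monotoneOn_of_hasDerivWithinAt_nonneg (convex_Ici 0)
      (fun x _ => (hderiv x).continuousAt.continuousWithinAt)
      (fun x _ => (hderiv x).hasDerivWithinAt) fun x _ => mul_nonneg hc₀ (sub_nonneg.2 ?_)
    rw [Real.cosh_le_cosh, abs_mul, abs_of_nonneg hc₀]
    exact mul_le_of_le_one_left (abs_nonneg x) hc₁
  simpa using hmono self_mem_Ici hy hy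

lemma cosh_sqrt_two_mul_le (y : ℝ) : Real.cosh (√2 * y) ≤ Real.cosh y ^ 2 := by
  wlog hy : 0 ≤ y generalizing y
  · simpa using this (-y) (by linarith)
  have hsinh : Real.sinh ((√2)⁻¹ * y) ≤ (√2)⁻¹ * Real.sinh y :=
    sinh_mul_le (by positivity) (inv_le_one_of_one_le₀ (by simp)) hy
  have hsq : Real.sinh ((√2)⁻¹ * y) ^ 2 ≤ Real.sinh y ^ 2 / 2 := by
    calc Real.sinh ((√2)⁻¹ * y) ^ 2 ≤ ((√2)⁻¹ * Real.sinh y) ^ 2 :=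
          pow_le_pow_left₀ (Real.sinh_nonneg_iff.2 (by positivity)) hsinh 2
      _ = Real.sinh y ^ 2 / 2 := by rw [mul_pow, inv_pow, Real.sq_sqrt (by norm_num)]; ring
  have harg : √2 * y = 2 * ((√2)⁻¹ * y) := by
    rw [← mul_assoc, ← div_eq_mul_inv, Real.div_sqrt]
  rw [harg, Real.cosh_two_mul, Real.cosh_sq, Real.cosh_sq y]
  linarith

lemma sech_sq_le_sech_sqrt_two_mul (y : ℝ) : sech y ^ 2 ≤ sech (√2 * y) := by
  rw [sech, sech, div_pow, one_pow]
  exact one_div_le_one_div_of_le (Real.cosh_pos _) (cosh_sqrt_two_mul_le y)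

/-- Up to normalization, the internal mode `Y₁` divided by the weight `sech (x / 8)`, in the
variable `x / √2`; compare `Z1_two_mul`. -/
noncomputable def internalMode (x : ℝ) : ℝ := Real.tanh x * sech x * Real.cosh (x / 8)

/-- The primitive of `-internalMode` that vanishes at `+∞`. -/
noncomputable def modeTail (x : ℝ) : ℝ := ∫ y in Ioi x, internalMode y

lemma continuous_internalMode : Continuous internalMode :=
  (continuous_tanh.mul continuous_sech).mul (by fun_prop)

lemma internalMode_nonneg {x : ℝ} (hx : 0 ≤ x) : 0 ≤ internalMode x := by
  rcases hx.eq_or_lt with rfl | hpos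
  · simp [internalMode]
  · exact (mul_pos (mul_pos (tanh_pos hpos) (sech_pos x)) (Real.cosh_pos _)).le

lemma sech_mul_cosh_div_eight_isBigO_exp :
    (fun x => sech x * Real.cosh (x / 8)) =O[atTop] fun x => Real.exp (-(7 / 8) * x) := by
  refine .of_bound 2 ?_
  filter_upwards [eventually_ge_atTop 0] with x hx
  have hcosh : Real.cosh (x / 8) ≤ Real.exp (x / 8) := by
    rw [← Real.cosh_add_sinh]
    exact le_add_of_nonneg_right (Real.sinh_nonneg_iff.2 (by positivity))
  rw [Real.norm_of_nonneg (mul_pos (sech_pos x) (Real.cosh_pos _)).le,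
    Real.norm_of_nonneg (Real.exp_pos _).le]
  calc sech x * Real.cosh (x / 8) ≤ (2 * Real.exp (-x)) * Real.exp (x / 8) :=
        mul_le_mul (sech_le_two_mul_exp_neg x) hcosh (Real.cosh_pos _).le (by positivity)
    _ = 2 * Real.exp (-(7 / 8) * x) := by rw [mul_assoc, ← Real.exp_add]; ring_nf

lemma tendsto_sech_mul_cosh_div_eight :
    Tendsto (fun x => sech x * Real.cosh (x / 8)) atTop (𝓝 0) :=
  sech_mul_cosh_div_eight_isBigO_exp.trans_tendsto <| Real.tendsto_exp_atBot.comp <|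
    tendsto_id.const_mul_atTop_of_neg (by norm_num)

lemma hasDerivAt_sech_mul_cosh_div_eight (x : ℝ) :
    HasDerivAt (fun x => sech x * Real.cosh (x / 8))
      (sech x * Real.sinh (x / 8) / 8 - internalMode x) x := by
  have hcosh := ((hasDerivAt_id x).div_const 8).cosh
  refine ((hasDerivAt_sech x).mul hcosh).congr_deriv ?_
  simp only [internalMode, id]
  ring

lemma internalMode_isBigO_exp : internalMode =O[atTop] fun x => Real.exp (-(7 / 8) * x) :=
  ((tanh_isBigO_one atTop).mul sech_mul_cosh_div_eight_isBigO_exp).congr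
    (fun _ => (mul_assoc _ _ _).symm) fun _ => one_mul _

lemma integrableOn_internalMode (a : ℝ) : IntegrableOn internalMode (Ioi a) :=
  integrable_of_isBigO_exp_neg (by norm_num) continuous_internalMode.continuousOn
    internalMode_isBigO_exp

lemma hasDerivAt_modeTail (x : ℝ) : HasDerivAt modeTail (-internalMode x) x := by
  have hprim := (continuous_internalMode.integral_hasStrictDerivAt 0 x).hasDerivAt
  refine (hprim.const_sub (modeTail 0)).congr_of_eventuallyEq (.of_forall fun y => ?_)
  exact (sub_eq_of_eq_add' (intervalIntegral.integral_interval_add_Ioi'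
    (continuous_internalMode.intervalIntegrable 0 y) (integrableOn_internalMode y)).symm).symm

lemma tendsto_modeTail : Tendsto modeTail atTop (𝓝 0) := tendsto_integral_Ioi_zero tendsto_id

lemma antitoneOn_modeTail : AntitoneOn modeTail (Ici 0) := fun a ha _ _ hab =>
  setIntegral_mono_set (integrableOn_internalMode a)
    (ae_restrict_of_forall_mem measurableSet_Ioi fun _ hy =>
      internalMode_nonneg (ha.trans (le_of_lt hy)))
    (Ioi_subset_Ioi hab).eventuallyLE

lemma le_of_deriv_le_of_tendsto_sub {f g f' g' : ℝ → ℝ} {a x : ℝ}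
    (hf : ∀ y, a ≤ y → HasDerivAt f (f' y) y) (hg : ∀ y, a ≤ y → HasDerivAt g (g' y) y)
    (hle : ∀ y, a < y → g' y ≤ f' y) (hlim : Tendsto (fun y => g y - f y) atTop (𝓝 0))
    (hx : a ≤ x) : f x ≤ g x := by
  have hanti : AntitoneOn (fun y => g y - f y) (Ici a) := by
    refine antitoneOn_of_hasDerivWithinAt_nonpos (f' := fun y => g' y - f' y) (convex_Ici a)
      (fun y hy => ((hg y hy).sub (hf y hy)).continuousAt.continuousWithinAt) ?_ ?_ <;>
    rw [interior_Ici]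
    · exact fun y hy => ((hg y (le_of_lt hy)).sub (hf y (le_of_lt hy))).hasDerivWithinAt
    · exact fun y hy => sub_nonpos.2 (hle y hy)
  refine sub_nonneg.1 (le_of_tendsto hlim ?_)
  filter_upwards [eventually_ge_atTop x] with y hy
  exact hanti hx (hx.trans hy) hy

lemma internalMode_le_sech_mul_sinh {x : ℝ} (hx : 0 ≤ x) :
    internalMode x ≤ 8 * (sech x * Real.sinh (x / 8)) := by
  have htanh : Real.tanh x ≤ 8 * Real.tanh (x / 8) := by
    simpa [mul_div_cancel₀] using tanh_nat_mul_le (s := x / 8) (by positivity) 8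
  calc internalMode x = Real.tanh x * (sech x * Real.cosh (x / 8)) := mul_assoc _ _ _
    _ ≤ 8 * Real.tanh (x / 8) * (sech x * Real.cosh (x / 8)) :=
        mul_le_mul_of_nonneg_right htanh (mul_pos (sech_pos x) (Real.cosh_pos _)).le
    _ = 8 * (sech x * Real.sinh (x / 8)) := by
        rw [Real.tanh_eq_sinh_div_cosh]
        field_simp [(Real.cosh_pos (x / 8)).ne']

lemma sech_mul_cosh_le_modeTail {x : ℝ} (hx : 0 ≤ x) :
    64 / 63 * (sech x * Real.cosh (x / 8)) ≤ modeTail x := by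
  refine le_of_deriv_le_of_tendsto_sub
    (fun y _ => (hasDerivAt_sech_mul_cosh_div_eight y).const_mul (64 / 63))
    (fun y _ => hasDerivAt_modeTail y) (fun y hy => ?_)
    (by simpa using tendsto_modeTail.sub (tendsto_sech_mul_cosh_div_eight.const_mul (64 / 63))) hx
  linarith [internalMode_le_sech_mul_sinh hy.le]

lemma modeTail_le {x : ℝ} (hx : 0 ≤ x) :
    modeTail x ≤ sech x * Real.cosh (x / 8)
      + (Real.exp (-(7 / 8) * x) / 7 - Real.exp (-(9 / 8) * x) / 9) := by
  have hexp (c y : ℝ) : HasDerivAt (fun y => Real.exp (c * y)) (Real.exp (c * y) * c) y := by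
    simpa using ((hasDerivAt_id y).const_mul c).exp
  have hlim {c : ℝ} (hc : c < 0) : Tendsto (fun y => Real.exp (c * y)) atTop (𝓝 0) :=
    Real.tendsto_exp_atBot.comp (tendsto_id.const_mul_atTop_of_neg hc)
  refine le_of_deriv_le_of_tendsto_sub (fun y _ => hasDerivAt_modeTail y)
    (fun y _ => (hasDerivAt_sech_mul_cosh_div_eight y).add
      (((hexp (-(7 / 8)) y).div_const 7).sub ((hexp (-(9 / 8)) y).div_const 9)))
    (fun y hy => ?_) ?_ hx
  · have hsinh : 0 ≤ Real.sinh (y / 8) := Real.sinh_nonneg_iff.2 (by positivity)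
    have hprod : 2 * Real.exp (-y) * Real.sinh (y / 8)
        = Real.exp (-(7 / 8) * y) - Real.exp (-(9 / 8) * y) := by
      rw [Real.sinh_eq, mul_right_comm, mul_div_cancel₀ _ two_ne_zero, sub_mul, ← Real.exp_add,
        ← Real.exp_add]
      ring_nf
    linarith [mul_le_mul_of_nonneg_right (sech_le_two_mul_exp_neg y) hsinh]
  · simpa using (tendsto_sech_mul_cosh_div_eight.add
      (((hlim (c := -(7 / 8)) (by norm_num)).div_const 7).sub
        ((hlim (c := -(9 / 8)) (by norm_num)).div_const 9))).sub tendsto_modeTail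

/-! ### The distance from the tail to `sech²` -/

/-- The difference between `modeTail (√2 y)` and a multiple of `sech² y`. The factor `64 / 63` is
the constant of `sech_mul_cosh_le_modeTail`, and makes the difference nonnegative. -/
noncomputable def modeResidual (y : ℝ) : ℝ := modeTail (√2 * y) - 64 / 63 * sech y ^ 2

lemma hasDerivAt_modeResidual (y : ℝ) :
    HasDerivAt modeResidual
      (128 / 63 * (Real.tanh y * sech y ^ 2) - √2 * internalMode (√2 * y)) y := by
  have hlin : HasDerivAt (fun y : ℝ => √2 * y) √2 y := by simpa using (hasDerivAt_id y).const_mul √2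
  refine (((hasDerivAt_modeTail _).comp y hlin).sub
    (((hasDerivAt_sech y).pow 2).const_mul (64 / 63))).congr_deriv ?_
  push_cast
  ring

lemma continuous_modeResidual : Continuous modeResidual :=
  continuous_iff_continuousAt.2 fun y => (hasDerivAt_modeResidual y).continuousAt

lemma modeResidual_nonneg {y : ℝ} (hy : 0 ≤ y) : 0 ≤ modeResidual y := by
  refine sub_nonneg.2 (le_trans ?_ (sech_mul_cosh_le_modeTail (by positivity)))
  gcongr
  exact (sech_sq_le_sech_sqrt_two_mul y).trans
    (le_mul_of_one_le_right (sech_pos _).le (Real.one_le_cosh _))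

lemma modeResidual_le_exp {y : ℝ} (hy : 0 ≤ y) :
    modeResidual y ≤ 15 / 7 * Real.exp (-(6 / 5) * y) := by
  have hx : 0 ≤ √2 * y := by positivity
  have hsqrt : 1.4 ≤ √2 := Real.le_sqrt_of_sq_le (by norm_num)
  have hsech : sech (√2 * y) * Real.cosh (√2 * y / 8)
      ≤ Real.exp (-(7 / 8) * (√2 * y)) + Real.exp (-(9 / 8) * (√2 * y)) := by
    refine (mul_le_mul_of_nonneg_right (sech_le_two_mul_exp_neg _) (Real.cosh_pos _).le).trans_eq ?_
    rw [Real.cosh_eq, mul_right_comm, mul_div_cancel₀ _ two_ne_zero, add_mul, ← Real.exp_add,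
      ← Real.exp_add]
    ring_nf
  have h97 : Real.exp (-(9 / 8) * (√2 * y)) ≤ Real.exp (-(7 / 8) * (√2 * y)) :=
    Real.exp_le_exp.2 (by linarith)
  have h76 : Real.exp (-(7 / 8) * (√2 * y)) ≤ Real.exp (-(6 / 5) * y) :=
    Real.exp_le_exp.2 (by nlinarith)
  rw [modeResidual]
  linarith [modeTail_le hx, pow_pos (sech_pos y) 2, Real.exp_pos (-(9 / 8) * (√2 * y))]

lemma modeResidual_isBigO_exp : modeResidual =O[atTop] fun y => Real.exp (-(6 / 5) * y) := by
  refine .of_bound (15 / 7) ?_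
  filter_upwards [eventually_ge_atTop 0] with y hy
  rw [Real.norm_of_nonneg (modeResidual_nonneg hy), Real.norm_of_nonneg (Real.exp_pos _).le]
  exact modeResidual_le_exp hy

lemma integrableOn_modeResidual_sq : IntegrableOn (fun y => modeResidual y ^ 2) (Ioi 0) := by
  refine integrable_of_isBigO_exp_neg (b := 12 / 5) (by norm_num)
    (continuous_modeResidual.pow 2).continuousOn
    ((modeResidual_isBigO_exp.pow 2).congr_right fun y => ?_)
  rw [← Real.exp_nat_mul]
  ring_nf

lemma modeTail_le_of_exp {x p : ℝ} (hx : 0 ≤ x) (hp : p = Real.exp (-(x / 8))) :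
    modeTail x ≤ (p ^ 7 + p ^ 9) / (1 + p ^ 16) + (p ^ 7 / 7 - p ^ 9 / 9) := by
  have hpow (n : ℕ) : p ^ n = Real.exp (-(n / 8) * x) := by
    rw [hp, ← Real.exp_nat_mul]
    ring_nf
  have hexp8 : Real.exp (-x) = p ^ 8 := by rw [hpow]; norm_num
  have hprod : sech x * Real.cosh (x / 8) = (p ^ 7 + p ^ 9) / (1 + p ^ 16) := by
    have hp0 : p ≠ 0 := hp ▸ (Real.exp_pos _).ne'
    rw [sech, Real.cosh_eq, Real.cosh_eq, ← neg_neg x, neg_neg (-x), Real.exp_neg (-x), hexp8,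
      neg_neg x, ← neg_neg (x / 8), neg_neg (-(x / 8)), Real.exp_neg (-(x / 8)), ← hp]
    field_simp
  refine (modeTail_le hx).trans_eq ?_
  rw [hprod, hpow 7, hpow 9]
  norm_num

lemma sech_sq_eq_of_exp {y e : ℝ} (he : e = Real.exp (-(2 * y))) :
    sech y ^ 2 = 4 * e / (1 + e) ^ 2 := by
  have hsq : e = Real.exp (-y) ^ 2 := by rw [he, ← Real.exp_nat_mul]; ring_nf
  have hinv : Real.exp y = (Real.exp (-y))⁻¹ := by rw [Real.exp_neg, inv_inv]
  rw [sech, Real.cosh_eq, hinv, hsq]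
  field_simp
  norm_num

/-- An upper bound for `modeResidual` on the cell `[k / 100, (k + 1) / 100]`, made of rational
approximations `p` of `exp (-√2 k / 800)` and `e` of `exp (-(k + 1) / 50)`. It is rational so that
`sum_cellCeil_sq_le` can be decided by evaluation. -/
def cellBound (k : ℕ) : ℚ :=
  let p : ℚ := (566 / 567) ^ k
  let e : ℚ := (99 / 101) ^ (k + 1)
  (p ^ 7 + p ^ 9) / (1 + p ^ 16) + (p ^ 7 / 7 - p ^ 9 / 9) - 64 / 63 * (4 * e / (1 + e) ^ 2)

lemma modeTail_sqrt_two_mul_le_of_le {k : ℕ} {y p : ℝ} (hy : k * (1 / 100) ≤ y)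
    (hp : p = (566 / 567) ^ k) :
    modeTail (√2 * y) ≤ (p ^ 7 + p ^ 9) / (1 + p ^ 16) + (p ^ 7 / 7 - p ^ 9 / 9) := by
  have hlog : Real.log (567 / 566) ≤ √2 / 800 := by
    have hsqrt : 1.4142 ≤ √2 := Real.le_sqrt_of_sq_le (by norm_num)
    linarith [Real.log_le_sub_one_of_pos (x := 567 / 566) (by norm_num)]
  have hgrid : 8 * (k * Real.log (567 / 566)) ≤ √2 * y := by
    calc 8 * (k * Real.log (567 / 566)) ≤ 8 * (k * (√2 / 800)) := by gcongr
      _ = √2 * (k * (1 / 100)) := by ring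
      _ ≤ √2 * y := by gcongr
  have hgrid0 : 0 ≤ 8 * (k * Real.log (567 / 566)) := by positivity
  refine (antitoneOn_modeTail hgrid0 (hgrid0.trans hgrid) hgrid).trans
    (modeTail_le_of_exp hgrid0 ?_)
  rw [hp, mul_div_cancel_left₀ _ (by norm_num), ← mul_neg, Real.exp_nat_mul, ← Real.log_inv,
    Real.exp_log (by norm_num), inv_div]

lemma le_sech_sq_of_le {k : ℕ} {y e : ℝ} (hy0 : 0 ≤ y) (hy : y ≤ (k + 1) * (1 / 100))
    (he : e = (99 / 101) ^ (k + 1)) : 4 * e / (1 + e) ^ 2 ≤ sech y ^ 2 := by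
  have hlog : 1 / 100 ≤ Real.log (101 / 99) / 2 := by
    have := Real.sum_range_le_log_div (x := 1 / 100) (by norm_num) (by norm_num) 1
    norm_num at this
    linarith
  have hgrid : y ≤ (k + 1 : ℕ) * (Real.log (101 / 99) / 2) := by
    push_cast
    exact hy.trans (by gcongr)
  refine (sech_sq_eq_of_exp ?_).symm.trans_le
    (pow_le_pow_left₀ (sech_pos _).le (antitoneOn_sech hy0 (hy0.trans hgrid) hgrid) 2)
  rw [he, mul_left_comm, mul_div_cancel₀ _ two_ne_zero, ← mul_neg, Real.exp_nat_mul,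
    ← Real.log_inv, Real.exp_log (by norm_num), inv_div]

lemma modeResidual_le_cellBound {k : ℕ} {y : ℝ}
    (hy : y ∈ Icc (k * (1 / 100) : ℝ) ((k + 1) * (1 / 100))) :
    modeResidual y ≤ cellBound k := by
  have htail := modeTail_sqrt_two_mul_le_of_le hy.1 rfl
  have hsech := le_sech_sq_of_le (le_trans (by positivity) hy.1) hy.2 rfl
  rw [modeResidual, cellBound]
  push_cast
  linarith

lemma intervalIntegral_le_sum_of_le_on_cells {f : ℝ → ℝ} {c : ℕ → ℝ} {δ : ℝ} (hδ : 0 ≤ δ)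
    (hf : Continuous f) (n : ℕ)
    (hle : ∀ k < n, ∀ y ∈ Icc (k * δ) ((k + 1) * δ), f y ≤ c k) :
    ∫ y in (0 : ℝ)..n * δ, f y ≤ δ * ∑ k ∈ Finset.range n, c k := by
  have hsum := intervalIntegral.sum_integral_adjacent_intervals (a := fun k : ℕ => (k : ℝ) * δ)
    (n := n) fun k _ => hf.intervalIntegrable (μ := volume) _ _
  simp only [Nat.cast_zero, zero_mul] at hsum
  rw [← hsum, Finset.mul_sum]
  refine Finset.sum_le_sum fun k hk => ?_
  have hcell : (k : ℝ) * δ ≤ (k + 1 : ℕ) * δ := by gcongr; simp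
  calc ∫ y in (k : ℝ) * δ..(k + 1 : ℕ) * δ, f y ≤ ∫ _ in (k : ℝ) * δ..(k + 1 : ℕ) * δ, c k :=
        intervalIntegral.integral_mono_on hcell (hf.intervalIntegrable _ _)
          intervalIntegrable_const fun y hy =>
            hle k (Finset.mem_range.1 hk) y (by simpa using hy)
    _ = δ * c k := by
        rw [intervalIntegral.integral_const, smul_eq_mul]
        push_cast
        ring

/-- `cellBound` in units of `10⁻⁵`, rounded up: summing integers keeps the denominators from
growing. -/
def cellCeil (k : ℕ) : ℤ := ⌈10 ^ 5 * cellBound k⌉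

lemma cellBound_le_cellCeil_div (k : ℕ) : (cellBound k : ℝ) ≤ cellCeil k / 10 ^ 5 := by
  have hceil : ((10 ^ 5 * cellBound k : ℚ) : ℝ) ≤ (cellCeil k : ℚ) :=
    Rat.cast_le.2 (Int.le_ceil _)
  push_cast at hceil
  rwa [le_div_iff₀' (by positivity)]

lemma sum_cellCeil_sq_le : ∑ k ∈ Finset.range 400, cellCeil k ^ 2 ≤ 9100000000 := by
  decide +kernel

lemma intervalIntegral_modeResidual_sq_le :
    ∫ y in (0 : ℝ)..4, modeResidual y ^ 2 ≤ 91 / 10000 := by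
  have hcell (k : ℕ) (y : ℝ) (hy : y ∈ Icc (k * (1 / 100) : ℝ) ((k + 1) * (1 / 100))) :
      modeResidual y ^ 2 ≤ (cellCeil k / 10 ^ 5 : ℝ) ^ 2 :=
    pow_le_pow_left₀ (modeResidual_nonneg (le_trans (by positivity) hy.1))
      ((modeResidual_le_cellBound hy).trans (cellBound_le_cellCeil_div k)) 2
  have hsum : ∑ k ∈ Finset.range 400, (cellCeil k : ℝ) ^ 2 ≤ 9100000000 := by
    exact_mod_cast sum_cellCeil_sq_le
  calc ∫ y in (0 : ℝ)..4, modeResidual y ^ 2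
      = ∫ y in (0 : ℝ)..(400 : ℕ) * (1 / 100), modeResidual y ^ 2 := by norm_num
    _ ≤ 1 / 100 * ∑ k ∈ Finset.range 400, (cellCeil k / 10 ^ 5 : ℝ) ^ 2 :=
        intervalIntegral_le_sum_of_le_on_cells (by norm_num) (continuous_modeResidual.pow 2) 400
          fun k _ => hcell k
    _ = 1 / 10 ^ 12 * ∑ k ∈ Finset.range 400, (cellCeil k : ℝ) ^ 2 := by
        simp only [div_pow, ← Finset.sum_div]
        ring
    _ ≤ 91 / 10000 := by linarith

lemma integral_Ioi_four_modeResidual_sq_le :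
    ∫ y in Ioi 4, modeResidual y ^ 2 ≤ 4 / 10000 := by
  have hexp : Real.exp (-(48 / 5)) ≤ (10 / 27) ^ 9 := by
    calc Real.exp (-(48 / 5)) ≤ Real.exp ((9 : ℕ) * -1) := Real.exp_le_exp.2 (by norm_num)
      _ = Real.exp (-1) ^ 9 := Real.exp_nat_mul _ _
      _ ≤ (10 / 27) ^ 9 := by
        gcongr
        rw [Real.exp_neg, inv_le_comm₀ (Real.exp_pos _) (by norm_num)]
        exact le_trans (by norm_num) Real.exp_one_gt_d9.le
  calc ∫ y in Ioi 4, modeResidual y ^ 2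
      ≤ ∫ y in Ioi 4, 225 / 49 * Real.exp (-(12 / 5) * y) := by
        refine setIntegral_mono_on
          (integrableOn_modeResidual_sq.mono_set (Ioi_subset_Ioi (by norm_num)))
          ((integrableOn_exp_mul_Ioi (by norm_num) 4).const_mul _) measurableSet_Ioi fun y hy => ?_
        have hy0 : 0 ≤ y := le_trans (by norm_num) (le_of_lt hy)
        refine (pow_le_pow_left₀ (modeResidual_nonneg hy0) (modeResidual_le_exp hy0) 2).trans_eq ?_
        rw [mul_pow, ← Real.exp_nat_mul]
        ring_nf
    _ = 225 / 49 * (5 / 12 * Real.exp (-(48 / 5))) := by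
        rw [integral_const_mul, integral_exp_mul_Ioi (by norm_num)]
        ring_nf
    _ ≤ 225 / 49 * (5 / 12 * (10 / 27) ^ 9) := by gcongr
    _ ≤ 4 / 10000 := by norm_num

lemma integral_modeResidual_sq_le : ∫ y in Ioi 0, modeResidual y ^ 2 ≤ 95 / 10000 := by
  have hint := integrableOn_modeResidual_sq
  rw [← intervalIntegral.integral_interval_add_Ioi hint
    (hint.mono_set (Ioi_subset_Ioi (by norm_num : (0 : ℝ) ≤ 4)))]
  linarith [intervalIntegral_modeResidual_sq_le, integral_Ioi_four_modeResidual_sq_le]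

/-! ### Coercivity on the half-line -/

lemma sq_integral_mul_le {α : Type*} [MeasurableSpace α] {μ : Measure α} {f g : α → ℝ}
    (hf : MemLp f 2 μ) (hg : MemLp g 2 μ) :
    (∫ x, f x * g x ∂μ) ^ 2 ≤ (∫ x, f x ^ 2 ∂μ) * ∫ x, g x ^ 2 ∂μ := by
  have hfg : Integrable (fun x => f x * g x) μ := hf.integrable_mul hg
  have hff := hf.integrable_sq
  have hquad (t : ℝ) :
      0 ≤ (∫ x, f x ^ 2 ∂μ) * (t * t) + 2 * (∫ x, f x * g x ∂μ) * t + ∫ x, g x ^ 2 ∂μ := by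
    calc (0 : ℝ) ≤ ∫ x, (t * t * f x ^ 2 + 2 * t * (f x * g x) + g x ^ 2) ∂μ :=
          integral_nonneg fun x => (sq_nonneg (t * f x + g x)).trans_eq (by ring)
      _ = _ := by
        rw [integral_add (by fun_prop) hg.integrable_sq, integral_add (by fun_prop) (by fun_prop),
          integral_const_mul, integral_const_mul]
        ring
  linarith [discrim_le_zero hquad,
    discrim.eq_def (∫ x, f x ^ 2 ∂μ) (2 * ∫ x, f x * g x ∂μ) (∫ x, g x ^ 2 ∂μ)]

section HalfLine

variable {W : ℝ → ℝ} (hW : Differentiable ℝ W) (h0 : W 0 = 0)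
  (hi : IntegrableOn (fun y => deriv W y ^ 2) (Ioi 0))

lemma memLp_two_modeResidual : MemLp modeResidual 2 (volume.restrict (Ioi 0)) :=
  (memLp_two_iff_integrable_sq continuous_modeResidual.aestronglyMeasurable).2
    integrableOn_modeResidual_sq

include hW h0 hi

lemma integrableOn_mul_internalMode :
    IntegrableOn (fun y => W y * internalMode (√2 * y)) (Ioi 0) := by
  have hmode := internalMode_isBigO_exp.comp_tendsto
    (tendsto_id.const_mul_atTop (by positivity : 0 < √2))
  refine integrable_of_isBigO_exp_neg (b := 7 / 16 * √2) (by positivity)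
    (hW.continuous.mul (continuous_internalMode.comp (by fun_prop))).continuousOn
    (((isBigO_exp_of_integrableOn_deriv_sq hW h0 hi (b := 7 / 16 * √2) (by positivity)).mul
      hmode).congr_right fun y => ?_)
  rw [Function.comp_apply, ← Real.exp_add]
  simp only [id]
  ring_nf

lemma integral_deriv_mul_modeResidual
    (horth : ∫ y in Ioi 0, W y * internalMode (√2 * y) = 0) :
    ∫ y in Ioi 0, deriv W y * modeResidual y =
      -(128 / 63 * ∫ y in Ioi 0, W y * Real.tanh y * sech y ^ 2) := by
  have hmode := (integrableOn_mul_internalMode hW h0 hi).const_mul √2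
  have htanh := (integrableOn_mul_tanh_mul_sech_sq hW h0 hi).const_mul (128 / 63)
  have hsplit (y : ℝ) : W y * (128 / 63 * (Real.tanh y * sech y ^ 2) - √2 * internalMode (√2 * y))
      = 128 / 63 * (W y * Real.tanh y * sech y ^ 2) - √2 * (W y * internalMode (√2 * y)) := by
    ring
  have hzero : Tendsto (W * modeResidual) (𝓝[>] 0) (𝓝 0) := by
    have hcont := (hW.continuous.mul continuous_modeResidual).tendsto 0
    rw [Pi.mul_apply, h0, zero_mul] at hcont
    exact hcont.mono_left nhdsWithin_le_nhds
  have hinfty : Tendsto (W * modeResidual) atTop (𝓝 0) := by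
    refine ((isBigO_exp_of_integrableOn_deriv_sq hW h0 hi (b := 1 / 5) (by norm_num)).mul
      modeResidual_isBigO_exp).trans_tendsto ?_
    simp only [← Real.exp_add]
    convert Real.tendsto_exp_neg_atTop_nhds_zero using 3
    ring
  have hparts := integral_Ioi_mul_deriv_eq_deriv_mul
    (fun y _ => (hW y).hasDerivAt) (fun y _ => hasDerivAt_modeResidual y)
    ((htanh.sub hmode).congr (.of_forall fun y => (hsplit y).symm))
    ((memLp_two_deriv hi).integrable_mul memLp_two_modeResidual) hzero hinfty
  simp only [hsplit] at hparts
  rw [integral_sub htanh hmode, integral_const_mul, integral_const_mul, horth] at hparts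
  linarith

theorem one_div_five_hundred_mul_integral_deriv_sq_le
    (horth : ∫ y in Ioi 0, W y * internalMode (√2 * y) = 0) :
    1 / 500 * ∫ y in Ioi 0, deriv W y ^ 2 ≤
      (∫ y in Ioi 0, deriv W y ^ 2) - 56 / 5 * ∫ y in Ioi 0, sech y ^ 2 * W y ^ 2 := by
  have hnonneg : 0 ≤ ∫ y in Ioi 0, deriv W y ^ 2 := integral_nonneg fun y => sq_nonneg _
  have hmoment : (128 / 63 * ∫ y in Ioi 0, W y * Real.tanh y * sech y ^ 2) ^ 2 ≤
      (∫ y in Ioi 0, deriv W y ^ 2) * (95 / 10000) := by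
    rw [← neg_sq, ← integral_deriv_mul_modeResidual hW h0 hi horth]
    refine (sq_integral_mul_le (memLp_two_deriv hi) memLp_two_modeResidual).trans ?_
    gcongr
    exact integral_modeResidual_sq_le
  linarith [twelve_mul_integral_sech_sq_mul_sq_le hW h0 hi]

end HalfLine

/-! ### Passing to the whole line -/

lemma integral_eq_four_mul_integral_Ioi_of_even {f : ℝ → ℝ} (hf : f.Even) :
    ∫ x, f x = 4 * ∫ y in Ioi 0, f (2 * y) := by
  have habs (x : ℝ) : f |x| = f x := by
    rcases abs_choice x with h | h <;> rw [h]
    exact hf x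
  have hhalf := integral_comp_abs (f := f)
  simp only [habs] at hhalf
  rw [hhalf, integral_comp_mul_left_Ioi f 0 two_pos, mul_zero, smul_eq_mul]
  ring

lemma integrable_of_integrableOn_Ioi_of_even {f : ℝ → ℝ} (hf : f.Even)
    (hi : IntegrableOn f (Ioi 0)) : Integrable f := by
  have hneg : IntegrableOn f (Iic 0) := by
    have hIci : IntegrableOn f (Ici (-0)) := by
      rwa [neg_zero, integrableOn_Ici_iff_integrableOn_Ioi]
    simpa only [hf _] using hIci.comp_neg_Iic
  rw [← integrableOn_univ, ← Iic_union_Ioi (a := 0)]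
  exact hneg.union hi

lemma even_deriv_of_odd {f : ℝ → ℝ} (hf : f.Odd) : (deriv f).Even := fun x => by
  have h := deriv_comp_neg f x
  rw [funext hf, deriv.fun_neg] at h
  linarith

lemma odd_Z1 : Z1.Odd := fun x => by
  simp only [Z1, neg_div, Real.tanh_neg, Real.cosh_neg, sech_neg]
  ring

lemma Z1_two_mul (y : ℝ) :
    Z1 (2 * y) = (2 : ℝ) ^ (-(3 : ℝ) / 4) * √3 * internalMode (√2 * y) := by
  have hsq : √2 * √2 = 2 := Real.mul_self_sqrt zero_le_two
  have hdiv : 2 * y / √2 = √2 * y := by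
    rw [div_eq_iff (by positivity), mul_right_comm, hsq]
  have hdiv8 : 2 * y / (8 * √2) = √2 * y / 8 := by
    rw [mul_comm 8, ← div_div, hdiv]
  rw [Z1, internalMode, hdiv, hdiv8]
  ring

section WholeLine

variable {w : ℝ → ℝ} (hodd : w.Odd)

lemma integrableOn_deriv_comp_two_mul_sq (hi : Integrable fun x => deriv w x ^ 2) :
    IntegrableOn (fun y => deriv (fun y => w (2 * y)) y ^ 2) (Ioi 0) := by
  simpa only [deriv_comp_mul_left, smul_eq_mul, mul_pow] using
    ((hi.comp_mul_left' two_ne_zero).const_mul (2 ^ 2)).integrableOn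

include hodd

lemma even_sech_sq_mul_sq : (fun x => sech (x / 2) ^ 2 * w x ^ 2).Even := fun x => by
  simp only [neg_div, sech_neg, hodd x, neg_sq]

lemma integral_deriv_sq_eq_of_odd :
    ∫ x, deriv w x ^ 2 = ∫ y in Ioi 0, deriv (fun y => w (2 * y)) y ^ 2 := by
  have heven : (fun x => deriv w x ^ 2).Even := fun x => by simp only [even_deriv_of_odd hodd x]
  simp only [integral_eq_four_mul_integral_Ioi_of_even heven, deriv_comp_mul_left, smul_eq_mul,
    mul_pow, integral_const_mul]
  norm_num

lemma integral_sech_sq_mul_sq_eq_of_odd :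
    ∫ x, sech (x / 2) ^ 2 * w x ^ 2 = 4 * ∫ y in Ioi 0, sech y ^ 2 * w (2 * y) ^ 2 := by
  simp only [integral_eq_four_mul_integral_Ioi_of_even (even_sech_sq_mul_sq hodd),
    mul_div_cancel_left₀ _ (two_ne_zero' ℝ)]

lemma integral_mul_Z1_eq_of_odd :
    ∫ x, w x * Z1 x = 4 * ((2 : ℝ) ^ (-(3 : ℝ) / 4) * √3) *
      ∫ y in Ioi 0, w (2 * y) * internalMode (√2 * y) := by
  have heven : (fun x => w x * Z1 x).Even := fun x => by
    simp only [hodd x, odd_Z1 x, neg_mul_neg]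
  simp only [integral_eq_four_mul_integral_Ioi_of_even heven, Z1_two_mul, mul_left_comm (w _),
    integral_const_mul]
  ring

lemma integrable_sech_sq_mul_sq (hw : Differentiable ℝ w)
    (hi : Integrable fun x => deriv w x ^ 2) :
    Integrable fun x => sech (x / 2) ^ 2 * w x ^ 2 := by
  refine integrable_of_integrableOn_Ioi_of_even (even_sech_sq_mul_sq hodd) ?_
  have hscale := integrableOn_Ioi_comp_mul_left_iff (fun x => sech (x / 2) ^ 2 * w x ^ 2) 0 two_pos
  rw [mul_zero] at hscale
  refine hscale.1 ?_
  simpa only [mul_div_cancel_left₀ _ (two_ne_zero' ℝ)] using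
    integrableOn_sech_sq_mul_sq (W := fun y => w (2 * y)) (by fun_prop)
      (by simpa using hodd.map_zero) (integrableOn_deriv_comp_two_mul_sq hi)

end WholeLine

theorem coercivity_step3_general :
    ∃ κ > 0, ∀ w : ℝ → ℝ,
      (∀ x : ℝ, w (-x) = -w x) →
      Differentiable ℝ w →
      Integrable (fun x => (deriv w x) ^ 2) →
      (∫ x : ℝ, w x * Z1 x) = 0 →
      (∫ x : ℝ, ((3 / 4) * (deriv w x) ^ 2 - (21 / 10) * sech (x / 2) ^ 2 * (w x) ^ 2))
        ≥ κ * (∫ x : ℝ, (deriv w x) ^ 2) := by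
  refine ⟨3 / 2000, by norm_num, fun w hodd hw hi horth => ?_⟩
  have horthHalf : ∫ y in Ioi 0, w (2 * y) * internalMode (√2 * y) = 0 := by
    rw [integral_mul_Z1_eq_of_odd hodd] at horth
    exact (mul_eq_zero.1 horth).resolve_left (by positivity)
  have hhalf := one_div_five_hundred_mul_integral_deriv_sq_le (W := fun y => w (2 * y))
    (by fun_prop) (by simpa using Function.Odd.map_zero hodd)
    (integrableOn_deriv_comp_two_mul_sq hi) horthHalf
  simp only [mul_assoc (21 / 10 : ℝ)]
  rw [integral_sub (hi.const_mul _) ((integrable_sech_sq_mul_sq hodd hw hi).const_mul _),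
    integral_const_mul, integral_const_mul, integral_deriv_sq_eq_of_odd hodd,
    integral_sech_sq_mul_sq_eq_of_odd hodd]
  linarith

theorem coercivity_step3 :
    ∃ κ > 0, ∀ w : ℝ → ℝ,
      (∀ x : ℝ, w (-x) = -w x) →
      Differentiable ℝ w →
      Integrable (fun x => (w x) ^ 2) →
      Integrable (fun x => (deriv w x) ^ 2) →
      (∫ x : ℝ, w x * Z1 x) = 0 →
      (∫ x : ℝ, ((3 / 4) * (deriv w x) ^ 2 - (21 / 10) * sech (x / 2) ^ 2 * (w x) ^ 2))
        ≥ κ * (∫ x : ℝ, (deriv w x) ^ 2) := by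
  obtain ⟨κ, hκ, hcoercive⟩ := coercivity_step3_general
  exact ⟨κ, hκ, fun w hodd hw _ => hcoercive w hodd hw⟩
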